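/- Let π* be an optimal assignment for weights w and let Δ^k be the iterates of the recursive sensitivity algorithm. Then for every edge (a,b) assigned in π*, the sequence k ↦ Δ^k(a,b) is monotone non-decreasing, and for every edge (a,b) not assigned in π*, the sequence k ↦ Δ^k(a,b) is monotone non-increasing. -/

import Mathlib

open Finset Filter Topology

/-- Cost of an assignment `π : T → A` under weights `w : A × T → ℝ`. -/
noncomputable def cost {A T : Type*} [Fintype T] (w : A × T → ℝ) (π : T → A) : ℝ :=
  ∑ b : T, w (π b, b)

/-- `πs` is an optimal assignment for weights `w`: it is injective (an assignment)
and minimizes the cost among all assignments. -/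
def Optimal {A T : Type*} [Fintype T] (w : A × T → ℝ) (πs : T → A) : Prop :=
  Function.Injective πs ∧ ∀ π : T → A, Function.Injective π → cost w πs ≤ cost w π

/-- `δ` is an allowable perturbation for `(w, πs)`: `πs` remains optimal for `w + δ`. -/
def Allowable {A T : Type*} [Fintype T] (w δ : A × T → ℝ) (πs : T → A) : Prop :=
  Optimal (w + δ) πs

-- The element-wise sensitivity of edge `(a, b)` for weights `w` and assignment `πs`.
open Classical in
noncomputable def sens {A T : Type*} [Fintype T] (w : A × T → ℝ) (πs : T → A)
    (a : A) (b : T) : ℝ :=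
  if πs b = a then
    sInf {c | ∃ π : T → A, Function.Injective π ∧ π b ≠ a ∧ cost w π = c} - cost w πs
  else
    cost w πs - sInf {c | ∃ π : T → A, Function.Injective π ∧ π b = a ∧ cost w π = c}

/-- Iterates of the recursive sensitivity algorithm: `Δ⁰ = 0` and
`Δ^{k+1}(a,b) = Δ^k(a,b) + s_{w+Δ^k}(a,b)/(2N)` with `N = |T|`. -/
noncomputable def iter {A T : Type*} [Fintype T] (w : A × T → ℝ) (πs : T → A) :
    ℕ → (A × T → ℝ)
  | 0 => 0
  | k + 1 => fun e =>
      iter w πs k e + sens (w + iter w πs k) πs e.1 e.2 / (2 * (Fintype.card T : ℝ))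

/-!
If `π b ≠ πs b`, the assignment `π` is a candidate in both minimizations that define the
sensitivities of the edges `(πs b, b)` and `(π b, b)`, so the first sensitivity exceeds the second
by at most twice the optimality gap `g = cost w π - cost w πs`. Summing over the `N` tasks, adding
the sensitivities to `w` shrinks the gap by at most `2 N g`. A step of size `1 / (2 N)` therefore
consumes at most the gap itself, so `πs` stays optimal along the iteration, and its optimality
fixes the sign of every sensitivity.
-/

lemma exists_injective_apply_eq {α β : Type*} {f : α → β} (hf : Function.Injective f) (x : α)
    (y : β) : ∃ g : α → β, Function.Injective g ∧ g x = y := by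
  classical
  let g : α ↪ β := Function.Embedding.setValue ⟨f, hf⟩ x y
  exact ⟨g, g.injective, Function.Embedding.setValue_eq _ x y⟩

section Cost

variable {A T : Type*} [Fintype T]

lemma cost_add (w δ : A × T → ℝ) (π : T → A) : cost (w + δ) π = cost w π + cost δ π := by
  simp [cost, Finset.sum_add_distrib]

lemma cost_smul (c : ℝ) (w : A × T → ℝ) (π : T → A) : cost (c • w) π = c * cost w π := by
  simp [cost, Finset.mul_sum]

end Cost

namespace Optimal

variable {A T : Type*} [Fintype T] {w : A × T → ℝ} {πs : T → A}

lemma cost_mem_lowerBounds (h : Optimal w πs) (P : (T → A) → Prop) :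
    cost w πs ∈ lowerBounds {c | ∃ π : T → A, Function.Injective π ∧ P π ∧ cost w π = c} := by
  rintro _ ⟨π, hπ, -, rfl⟩
  exact h.2 π hπ

lemma sens_nonneg [Nontrivial A] (h : Optimal w πs) (b : T) : 0 ≤ sens w πs (πs b) b := by
  obtain ⟨a, ha⟩ := exists_ne (πs b)
  obtain ⟨π, hπ, rfl⟩ := exists_injective_apply_eq h.1 b a
  rw [sens, if_pos rfl, sub_nonneg]
  exact le_csInf ⟨_, π, hπ, ha, rfl⟩ (h.cost_mem_lowerBounds fun π ↦ π b ≠ πs b)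

lemma sens_nonpos (h : Optimal w πs) {a : A} {b : T} (hab : πs b ≠ a) : sens w πs a b ≤ 0 := by
  obtain ⟨π, hπ, hb⟩ := exists_injective_apply_eq h.1 b a
  rw [sens, if_neg hab, sub_nonpos]
  exact le_csInf ⟨_, π, hπ, hb, rfl⟩ (h.cost_mem_lowerBounds fun π ↦ π b = a)

lemma sens_le_cost_sub_cost (h : Optimal w πs) {π : T → A} (hπ : Function.Injective π) {b : T}
    (hb : π b ≠ πs b) : sens w πs (πs b) b ≤ cost w π - cost w πs := by
  rw [sens, if_pos rfl]
  gcongr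
  exact csInf_le ⟨_, h.cost_mem_lowerBounds fun π ↦ π b ≠ πs b⟩ ⟨π, hπ, hb, rfl⟩

lemma cost_sub_cost_le_sens (h : Optimal w πs) {π : T → A} (hπ : Function.Injective π) {b : T}
    (hb : π b ≠ πs b) : cost w πs - cost w π ≤ sens w πs (π b) b := by
  rw [sens, if_neg hb.symm]
  gcongr
  exact csInf_le ⟨_, h.cost_mem_lowerBounds fun π' ↦ π' b = π b⟩ ⟨π, hπ, rfl, rfl⟩

lemma sens_sub_sens_le (h : Optimal w πs) {π : T → A} (hπ : Function.Injective π) (b : T) :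
    sens w πs (πs b) b - sens w πs (π b) b ≤ 2 * (cost w π - cost w πs) := by
  by_cases hb : π b = πs b
  · rw [hb, sub_self]
    linarith [h.2 π hπ]
  · linarith [h.sens_le_cost_sub_cost hπ hb, h.cost_sub_cost_le_sens hπ hb]

lemma cost_sens_sub_cost_sens_le (h : Optimal w πs) {π : T → A} (hπ : Function.Injective π) :
    cost (Function.uncurry (sens w πs)) πs - cost (Function.uncurry (sens w πs)) π ≤
      2 * Fintype.card T * (cost w π - cost w πs) :=
  calc
    _ = ∑ b, (sens w πs (πs b) b - sens w πs (π b) b) := (Finset.sum_sub_distrib _ _).symm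
    _ ≤ Fintype.card T • (2 * (cost w π - cost w πs)) :=
      Finset.sum_le_card_nsmul _ _ _ fun b _ ↦ h.sens_sub_sens_le hπ b
    _ = _ := by rw [nsmul_eq_mul]; ring

lemma allowable_smul_sens (h : Optimal w πs) {c : ℝ} (hc₀ : 0 ≤ c)
    (hc₁ : c * (2 * Fintype.card T) ≤ 1) :
    Allowable w (c • Function.uncurry (sens w πs)) πs := by
  refine ⟨h.1, fun π hπ ↦ ?_⟩
  set s := Function.uncurry (sens w πs)
  have hgap : 0 ≤ cost w π - cost w πs := sub_nonneg.mpr (h.2 π hπ)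
  have hstep : c * (cost s πs - cost s π) ≤ cost w π - cost w πs :=
    calc
      _ ≤ c * (2 * Fintype.card T * (cost w π - cost w πs)) := by
        gcongr
        exact h.cost_sens_sub_cost_sens_le hπ
      _ = c * (2 * Fintype.card T) * (cost w π - cost w πs) := (mul_assoc _ _ _).symm
      _ ≤ cost w π - cost w πs := mul_le_of_le_one_left hgap hc₁
  simp only [cost_add, cost_smul]
  linarith

end Optimal

section Iter

variable {A T : Type*} [Fintype T] {w : A × T → ℝ} {πs : T → A}

lemma iter_succ (w : A × T → ℝ) (πs : T → A) (k : ℕ) :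
    iter w πs (k + 1) = iter w πs k +
      (2 * Fintype.card T : ℝ)⁻¹ • Function.uncurry (sens (w + iter w πs k) πs) := by
  ext e
  simp only [iter, Pi.add_apply, Pi.smul_apply, Function.uncurry, smul_eq_mul, div_eq_inv_mul]

lemma Optimal.allowable_iter (h : Optimal w πs) (k : ℕ) : Allowable w (iter w πs k) πs := by
  induction k with
  | zero => rwa [Allowable, iter, add_zero]
  | succ k ih =>
    rw [Allowable, iter_succ, ← add_assoc]
    exact Optimal.allowable_smul_sens ih (by positivity) inv_mul_le_one

lemma Optimal.monotone_iter [Nontrivial A] (h : Optimal w πs) (b : T) :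
    Monotone fun k ↦ iter w πs k (πs b, b) :=
  monotone_nat_of_le_succ fun k ↦ le_add_of_nonneg_right <|
    div_nonneg (Optimal.sens_nonneg (h.allowable_iter k) b) (by positivity)

lemma Optimal.antitone_iter (h : Optimal w πs) {a : A} {b : T} (hab : πs b ≠ a) :
    Antitone fun k ↦ iter w πs k (a, b) :=
  antitone_nat_of_succ_le fun k ↦ add_le_of_nonpos_right <|
    div_nonpos_of_nonpos_of_nonneg (Optimal.sens_nonpos (h.allowable_iter k) hab) (by positivity)

end Iter

theorem stmt13_general {A T : Type*} [Nontrivial A] [Fintype T]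
    (w : A × T → ℝ) (πs : T → A) (hopt : Optimal w πs) :
    ∀ a b, (πs b = a → Monotone fun k => iter w πs k (a, b)) ∧
           (πs b ≠ a → Antitone fun k => iter w πs k (a, b)) :=
  fun _ b ↦ ⟨fun hab ↦ hab ▸ hopt.monotone_iter b, hopt.antitone_iter⟩

theorem stmt13 {A T : Type*} [Fintype A] [Fintype T] [Nonempty A] [Nonempty T]
    (hT : 2 ≤ Fintype.card T) (hAT : Fintype.card T ≤ Fintype.card A)
    (w : A × T → ℝ) (πs : T → A)
    (hopt : Optimal w πs) :
    ∀ a b, (πs b = a → Monotone fun k => iter w πs k (a, b)) ∧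
           (πs b ≠ a → Antitone fun k => iter w πs k (a, b)) := by
  have : Nontrivial T := Fintype.one_lt_card_iff_nontrivial.mp hT
  have : Nontrivial A := hopt.1.nontrivial
  exact stmt13_general w πs hopt
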